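/- For every real q with 0 < q < 1, ∏_{n=1}^∞ (1 - q^{n/3})·(1 - q^{n/3} + q^{2n/3}) = ∑_{k∈ℤ} ( q^{6k²+k} + q^{6k²+5k+1} - 2 q^{6k²+3k+1/3} ). -/

import Mathlib

open scoped Real

/-!
Jacobi's triple product `∏ (1 - xⁿ) (1 + z xⁿ) (1 + z⁻¹ xⁿ⁻¹) = ∑ x ^ (k (k + 1) / 2) zᵏ` is the
limit of Gauss's `q`-binomial theorem for `∏_{i < 2n} (1 + z x^{1 - n} xⁱ)`: reversing the lower
half of the factors makes the identity symmetric, and dominated convergence applies because Gaussian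
binomials are uniformly bounded for `‖x‖ < 1`.

For `x = q ^ (1 / 3)` and `z = ω` a primitive cube root of unity, `(1 + ω xⁿ) (1 + ω⁻¹ xⁿ)` is
`1 - xⁿ + x²ⁿ`. The exponent `k (k + 1) / 2` is invariant under `k ↦ -1 - k`, so folding the series
along this reflection leaves the residues `0, 1, 2` modulo `6`, on which the coefficients
`ωᵏ + ω⁻¹⁻ᵏ` are `1, -2, 1` times `1 + ω⁻¹`.
-/

open Filter Finset Topology

namespace JacobiTriple

section Reindexing

theorem hasSum_sum_range_mul_add {M : Type*} [AddCommMonoid M] [TopologicalSpace M]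
    [ContinuousAdd M] [RegularSpace M] {f : ℤ → M} {a : M} {n : ℕ} (hn : n ≠ 0)
    (hf : HasSum f a) : HasSum (fun k : ℤ ↦ ∑ r ∈ range n, f (n * k + r)) a := by
  have : NeZero n := ⟨hn⟩
  refine ((Int.divModEquiv n).symm.hasSum_iff.mpr hf).prod_fiberwise fun k ↦ ?_
  rw [sum_range]
  simpa only [Function.comp_apply, Int.divModEquiv_symm_apply, mul_comm] using hasSum_fintype _

variable {E : Type*} [AddCommGroup E] [UniformSpace E] [IsUniformAddGroup E] [CompleteSpace E]
  [T2Space E] {f : ℤ → E}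

theorem tsum_eq_tsum_even_add_reflect (hf : Summable f) :
    ∑' k, f k = ∑' k : ℤ, (f (2 * k) + f (-1 - 2 * k)) := by
  have heven : Summable fun k : ℤ ↦ f (2 * k) :=
    hf.comp_injective (i := fun k ↦ 2 * k) fun _ _ h ↦ by simpa using h
  have hodd : Summable fun k : ℤ ↦ f (2 * k + 1) :=
    hf.comp_injective (i := fun k ↦ 2 * k + 1) fun _ _ h ↦ by simpa using h
  have hreflect (k : ℤ) : f (2 * Equiv.subLeft (-1) k + 1) = f (-1 - 2 * k) := by
    congr 1
    rw [Equiv.subLeft_apply]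
    ring
  have hodd' : Summable fun k : ℤ ↦ f (-1 - 2 * k) :=
    ((Equiv.subLeft (-1)).summable_iff.mpr hodd).congr hreflect
  calc ∑' k, f k = ∑' k : ℤ, (f (2 * k) + f (2 * k + 1)) := by
        rw [← (hasSum_sum_range_mul_add two_ne_zero hf.hasSum).tsum_eq]
        simp [sum_range_succ]
    _ = ∑' k : ℤ, f (2 * k) + ∑' k : ℤ, f (-1 - 2 * k) := by
        rw [heven.tsum_add hodd, ← (Equiv.subLeft (-1)).tsum_eq fun k : ℤ ↦ f (2 * k + 1),
          tsum_congr hreflect]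
    _ = ∑' k : ℤ, (f (2 * k) + f (-1 - 2 * k)) := (heven.tsum_add hodd').symm

theorem tsum_eq_tsum_sum_range_add_reflect {n : ℕ} (hn : n ≠ 0) (hf : Summable f) :
    ∑' k, f k = ∑' k : ℤ, ∑ r ∈ range n, (f (2 * n * k + r) + f (-1 - (2 * n * k + r))) := by
  have hblocks := hasSum_sum_range_mul_add hn hf.hasSum
  rw [← hblocks.tsum_eq, tsum_eq_tsum_even_add_reflect hblocks.summable]
  refine tsum_congr fun k ↦ ?_
  rw [sum_add_distrib, ← sum_range_reflect (fun r : ℕ ↦ f (n * (-1 - 2 * k) + r))]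
  refine congr_arg₂ (· + ·) (sum_congr rfl fun r _ ↦ ?_) (sum_congr rfl fun r hr ↦ ?_)
  · congr 1
    ring
  · have hr' := mem_range.mp hr
    congr 1
    push_cast [Nat.sub_sub, Nat.cast_sub (show 1 + r ≤ n by lia)]
    ring

end Reindexing

section GaussBinom

variable {R : Type*} [CommSemiring R]

/-- The Gaussian binomial coefficient `[n, k]_q`, defined by the `q`-analogue of Pascal's rule
so that it makes sense in every ring and vanishes for `k > n`, like `Nat.choose`. -/
def gaussBinom (q : R) : ℕ → ℕ → R
  | _, 0 => 1
  | 0, _ + 1 => 0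
  | n + 1, k + 1 => gaussBinom q n k + q ^ (k + 1) * gaussBinom q n (k + 1)

theorem gaussBinom_zero_right (q : R) (n : ℕ) : gaussBinom q n 0 = 1 := by
  rw [gaussBinom]

theorem gaussBinom_succ_succ (q : R) (n k : ℕ) :
    gaussBinom q (n + 1) (k + 1) = gaussBinom q n k + q ^ (k + 1) * gaussBinom q n (k + 1) := by
  rw [gaussBinom]

theorem gaussBinom_eq_zero_of_lt (q : R) {n k : ℕ} (h : n < k) : gaussBinom q n k = 0 := by
  induction n generalizing k with
  | zero =>
    obtain ⟨k, rfl⟩ := Nat.exists_eq_succ_of_ne_zero h.ne'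
    rw [gaussBinom]
  | succ n ih =>
    obtain ⟨k, rfl⟩ := Nat.exists_eq_succ_of_ne_zero (Nat.ne_zero_of_lt h)
    rw [gaussBinom_succ_succ, ih (by lia), ih (by lia), mul_zero, add_zero]

theorem gaussBinom_self (q : R) (n : ℕ) : gaussBinom q n n = 1 := by
  induction n with
  | zero => exact gaussBinom_zero_right q 0
  | succ n ih =>
    rw [gaussBinom_succ_succ, ih, gaussBinom_eq_zero_of_lt q n.lt_succ_self, mul_zero, add_zero]

theorem prod_one_add_mul_pow_eq_sum_gaussBinom (q y : R) (n : ℕ) :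
    ∏ i ∈ range n, (1 + y * q ^ i) =
      ∑ k ∈ range (n + 1), gaussBinom q n k * (q ^ k.choose 2 * y ^ k) := by
  induction n generalizing y with
  | zero => simp [gaussBinom_zero_right]
  | succ n ih =>
    have hshift : ∏ i ∈ range n, (1 + y * q ^ (i + 1)) =
        ∑ k ∈ range (n + 1), q ^ k * gaussBinom q n k * (q ^ k.choose 2 * y ^ k) := by
      rw [← prod_congr rfl fun i _ ↦ show 1 + y * q * q ^ i = 1 + y * q ^ (i + 1) by ring, ih]
      exact sum_congr rfl fun k _ ↦ by ring
    have hextend : ∑ k ∈ range (n + 1), q ^ k * gaussBinom q n k * (q ^ k.choose 2 * y ^ k) =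
        ∑ k ∈ range (n + 1), q ^ (k + 1) * gaussBinom q n (k + 1) *
          (q ^ (k + 1).choose 2 * y ^ (k + 1)) + 1 := by
      rw [sum_range_succ', sum_range_succ _ n, gaussBinom_eq_zero_of_lt q n.lt_succ_self]
      simp [gaussBinom_zero_right]
    rw [prod_range_succ', hshift, pow_zero, mul_one, mul_add, mul_one, sum_mul,
      sum_range_succ' _ (n + 1), gaussBinom_zero_right]
    nth_rw 1 [hextend]
    rw [add_right_comm, ← sum_add_distrib]
    congr 1
    · refine sum_congr rfl fun k _ ↦ ?_
      rw [gaussBinom_succ_succ, Nat.choose_succ_succ' k 1, Nat.choose_one_right]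
      ring
    · simp

end GaussBinom

section QPochhammer

variable {R : Type*} [CommRing R]

/-- The finite `q`-Pochhammer symbol `(q; q)_n = (1 - q) ⋯ (1 - qⁿ)`, which plays
the role of the factorial in the closed form of `gaussBinom`. -/
def qPochhammer (q : R) (n : ℕ) : R := ∏ i ∈ range n, (1 - q ^ (i + 1))

theorem qPochhammer_succ (q : R) (n : ℕ) :
    qPochhammer q (n + 1) = qPochhammer q n * (1 - q ^ (n + 1)) :=
  prod_range_succ _ _

theorem gaussBinom_add_mul_qPochhammer_mul_qPochhammer (q : R) (m k : ℕ) :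
    gaussBinom q (m + k) k * (qPochhammer q m * qPochhammer q k) = qPochhammer q (m + k) := by
  induction k generalizing m with
  | zero => simp [gaussBinom_zero_right, qPochhammer]
  | succ k ihk =>
    induction m with
    | zero => simp [gaussBinom_self, qPochhammer]
    | succ m ihm =>
      have hk := ihk (m + 1)
      rw [show m + 1 + (k + 1) = m + 1 + k + 1 by ring, gaussBinom_succ_succ,
        qPochhammer_succ q (m + 1 + k)]
      rw [show m + (k + 1) = m + 1 + k by ring] at ihm
      linear_combination (1 - q ^ (k + 1)) * hk + q ^ (k + 1) * (1 - q ^ (m + 1)) * ihm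
        + gaussBinom q (m + 1 + k) k * qPochhammer q (m + 1) * qPochhammer_succ q k
        + q ^ (k + 1) * gaussBinom q (m + 1 + k) (k + 1) * qPochhammer q (k + 1)
          * qPochhammer_succ q m

end QPochhammer

section JacobiTerm

variable {K : Type*} [Field K]

/-- The general term `q ^ (k (k + 1) / 2) * z ^ k` of the theta series in Jacobi's triple product.
The division is exact. -/
def jacobiTerm (q z : K) (k : ℤ) : K := q ^ (k * (k + 1) / 2) * z ^ k

theorem jacobiTerm_zero (q z : K) : jacobiTerm q z 0 = 1 := by simp [jacobiTerm]

theorem jacobiTerm_add_one {q z : K} (hq : q ≠ 0) (hz : z ≠ 0) (k : ℤ) :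
    jacobiTerm q z (k + 1) = jacobiTerm q z k * (q ^ (k + 1) * z) := by
  have hexp : (k + 1) * (k + 1 + 1) / 2 = k * (k + 1) / 2 + (k + 1) := by
    rw [show (k + 1) * (k + 1 + 1) = k * (k + 1) + (k + 1) * 2 by ring,
      Int.add_mul_ediv_right _ _ two_ne_zero]
  rw [jacobiTerm, jacobiTerm, hexp, zpow_add₀ hq, zpow_add_one₀ hz]
  ring

theorem jacobiTerm_neg_one_sub (q : K) {z : K} (hz : z ≠ 0) (k : ℤ) :
    jacobiTerm q z (-1 - k) = z⁻¹ * jacobiTerm q z⁻¹ k := by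
  rw [jacobiTerm, jacobiTerm, show (-1 - k) * (-1 - k + 1) = k * (k + 1) by ring, zpow_sub₀ hz,
    inv_zpow, zpow_neg_one]
  ring

theorem jacobiTerm_sub_natCast {q z : K} (hq : q ≠ 0) (hz : z ≠ 0) (n k : ℕ) :
    jacobiTerm q z (k - n) =
      jacobiTerm q z (-n) * (q ^ k.choose 2 * (z * q ^ (1 - n : ℤ)) ^ k) := by
  induction k with
  | zero => simp
  | succ k ih =>
    rw [Nat.cast_add_one, add_sub_right_comm, jacobiTerm_add_one hq hz, ih,
      Nat.choose_succ_succ' k 1, Nat.choose_one_right,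
      show (k : ℤ) - n + 1 = k + (1 - n) by ring, zpow_add₀ hq, zpow_natCast]
    ring

theorem jacobiTerm_neg_mul_prod {q z : K} (hq : q ≠ 0) (hz : z ≠ 0) (n : ℕ) :
    jacobiTerm q z (-n) * ∏ i ∈ range n, (1 + z * q ^ (-i : ℤ)) =
      ∏ i ∈ range n, (1 + z⁻¹ * q ^ i) := by
  induction n with
  | zero => simp [jacobiTerm_zero]
  | succ n ih =>
    have hterm := jacobiTerm_add_one hq hz (-(n + 1 : ℕ))
    rw [Nat.cast_add_one, neg_add, neg_add_cancel_right, zpow_neg, zpow_natCast] at hterm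
    rw [prod_range_succ, prod_range_succ, ← ih, hterm, Nat.cast_add_one, neg_add, zpow_neg,
      zpow_natCast]
    field_simp
    ring

theorem prod_mul_prod_eq_sum_gaussBinom_mul_jacobiTerm {q z : K} (hq : q ≠ 0) (hz : z ≠ 0)
    (n : ℕ) :
    (∏ i ∈ range n, (1 + z * q ^ (i + 1))) * ∏ i ∈ range n, (1 + z⁻¹ * q ^ i) =
      ∑ k ∈ Icc (-n : ℤ) n, gaussBinom q (2 * n) (n + k).toNat * jacobiTerm q z k := by
  have hlower : ∏ i ∈ range n, (1 + z * q ^ (1 - n : ℤ) * q ^ i) =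
      ∏ i ∈ range n, (1 + z * q ^ (-i : ℤ)) := by
    rw [← prod_range_reflect]
    refine prod_congr rfl fun i hi ↦ ?_
    have hi' := mem_range.mp hi
    rw [mul_assoc, ← zpow_natCast, ← zpow_add₀ hq]
    congr 3
    lia
  have hupper : ∏ i ∈ range n, (1 + z * q ^ (1 - n : ℤ) * q ^ (n + i)) =
      ∏ i ∈ range n, (1 + z * q ^ (i + 1)) := by
    refine prod_congr rfl fun i _ ↦ ?_
    rw [mul_assoc, ← zpow_natCast, ← zpow_natCast, ← zpow_add₀ hq]
    congr 3
    push_cast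
    ring
  calc _ = jacobiTerm q z (-n) * ∏ i ∈ range (2 * n), (1 + z * q ^ (1 - n : ℤ) * q ^ i) := by
        rw [two_mul, prod_range_add, hlower, hupper, ← mul_assoc, jacobiTerm_neg_mul_prod hq hz,
          mul_comm]
    _ = ∑ j ∈ range (2 * n + 1), gaussBinom q (2 * n) j * jacobiTerm q z (j - n) := by
        rw [prod_one_add_mul_pow_eq_sum_gaussBinom, mul_sum]
        refine sum_congr rfl fun j _ ↦ ?_
        rw [jacobiTerm_sub_natCast hq hz]
        ring
    _ = _ := by
        refine sum_nbij' (fun j ↦ (j : ℤ) - n) (fun k ↦ (n + k).toNat) ?_ ?_ ?_ ?_ ?_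
        · simp only [mem_range, mem_Icc]
          lia
        · simp only [mem_range, mem_Icc]
          lia
        · simp
        · simp only [mem_Icc]
          lia
        · simp

end JacobiTerm

section Limits

variable {K : Type*} [NormedField K] {q z : K}

theorem summable_norm_mul_pow (a : K) (hq : ‖q‖ < 1) : Summable fun n : ℕ ↦ ‖a * q ^ n‖ := by
  simpa only [norm_mul, norm_pow] using
    (summable_geometric_of_lt_one (norm_nonneg q) hq).mul_left ‖a‖

theorem one_sub_pow_succ_ne_zero (hq : ‖q‖ < 1) (n : ℕ) : 1 - q ^ (n + 1) ≠ 0 := by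
  refine sub_ne_zero.mpr fun h ↦ ?_
  have hlt : ‖q ^ (n + 1)‖ < 1 := by
    rw [norm_pow]
    exact pow_lt_one₀ (norm_nonneg q) hq n.succ_ne_zero
  rw [← h, norm_one] at hlt
  exact lt_irrefl 1 hlt

theorem qPochhammer_ne_zero (hq : ‖q‖ < 1) (n : ℕ) : qPochhammer q n ≠ 0 :=
  prod_ne_zero_iff.mpr fun i _ ↦ one_sub_pow_succ_ne_zero hq i

theorem gaussBinom_add_eq_div (hq : ‖q‖ < 1) (m k : ℕ) :
    gaussBinom q (m + k) k = qPochhammer q (m + k) / (qPochhammer q m * qPochhammer q k) :=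
  eq_div_of_mul_eq (mul_ne_zero (qPochhammer_ne_zero hq m) (qPochhammer_ne_zero hq k))
    (gaussBinom_add_mul_qPochhammer_mul_qPochhammer q m k)

theorem summable_norm_jacobiTerm_natCast (hq0 : q ≠ 0) (hq : ‖q‖ < 1) (hz : z ≠ 0) :
    Summable fun n : ℕ ↦ ‖jacobiTerm q z n‖ := by
  have hratio : Tendsto (fun n : ℕ ↦ ‖q ^ (n + 1) * z‖) atTop (𝓝 0) := by
    simpa using (((tendsto_pow_atTop_nhds_zero_of_norm_lt_one hq).comp
      (tendsto_add_atTop_nat 1)).mul_const z).norm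
  refine summable_of_ratio_norm_eventually_le one_half_lt_one ?_
  filter_upwards [hratio.eventually_le_const one_half_pos] with n hn
  rw [norm_norm, norm_norm, Nat.cast_add_one, jacobiTerm_add_one hq0 hz, norm_mul, mul_comm]
  gcongr
  exact_mod_cast hn

theorem summable_norm_jacobiTerm (hq0 : q ≠ 0) (hq : ‖q‖ < 1) (hz : z ≠ 0) :
    Summable fun k ↦ ‖jacobiTerm q z k‖ := by
  have hreflect (n : ℕ) : ‖z⁻¹‖ * ‖jacobiTerm q z⁻¹ n‖ = ‖jacobiTerm q z (-(n + 1))‖ := by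
    rw [← norm_mul, ← jacobiTerm_neg_one_sub q hz, neg_add_rev, ← sub_eq_add_neg]
  exact .of_nat_of_neg_add_one (f := fun k ↦ ‖jacobiTerm q z k‖)
    (summable_norm_jacobiTerm_natCast hq0 hq hz)
    (((summable_norm_jacobiTerm_natCast hq0 hq (inv_ne_zero hz)).mul_left ‖z⁻¹‖).congr hreflect)

variable [CompleteSpace K]

theorem multipliable_one_add_mul_pow (a : K) (hq : ‖q‖ < 1) :
    Multipliable fun n : ℕ ↦ 1 + a * q ^ n :=
  multipliable_one_add_of_summable (summable_norm_mul_pow a hq)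

theorem multipliable_one_add_mul_pow_succ (a : K) (hq : ‖q‖ < 1) :
    Multipliable fun n : ℕ ↦ 1 + a * q ^ (n + 1) :=
  (multipliable_one_add_mul_pow (a * q) hq).congr fun n ↦ by ring

theorem multipliable_one_sub_pow_succ (hq : ‖q‖ < 1) :
    Multipliable fun n : ℕ ↦ 1 - q ^ (n + 1) :=
  (multipliable_one_add_mul_pow_succ (-1) hq).congr fun n ↦ by ring

theorem tprod_one_sub_pow_succ_ne_zero (hq : ‖q‖ < 1) : ∏' n : ℕ, (1 - q ^ (n + 1)) ≠ 0 := by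
  have heq (n : ℕ) : 1 + -q * q ^ n = 1 - q ^ (n + 1) := by ring
  rw [← tprod_congr heq]
  refine tprod_one_add_ne_zero_of_summable (fun n ↦ ?_) (summable_norm_mul_pow (-q) hq)
  rw [heq]
  exact one_sub_pow_succ_ne_zero hq n

theorem tendsto_qPochhammer (hq : ‖q‖ < 1) :
    Tendsto (qPochhammer q) atTop (𝓝 (∏' n : ℕ, (1 - q ^ (n + 1)))) :=
  (multipliable_one_sub_pow_succ hq).hasProd.tendsto_prod_nat

theorem exists_norm_gaussBinom_le (hq : ‖q‖ < 1) :
    ∃ C : ℝ, ∀ n k : ℕ, ‖gaussBinom q n k‖ ≤ C := by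
  have hlim := tendsto_qPochhammer hq
  obtain ⟨A, hA⟩ := (Metric.isBounded_range_of_tendsto _ hlim).exists_norm_le
  obtain ⟨B, hB⟩ := (Metric.isBounded_range_of_tendsto _
    (hlim.inv₀ (tprod_one_sub_pow_succ_ne_zero hq))).exists_norm_le
  rw [Set.forall_mem_range] at hA hB
  have hA0 : 0 ≤ A := (norm_nonneg _).trans (hA 0)
  have hB0 : 0 ≤ B := (norm_nonneg _).trans (hB 0)
  refine ⟨A * (B * B), fun n k ↦ ?_⟩
  obtain hnk | hkn := lt_or_ge n k
  · rw [gaussBinom_eq_zero_of_lt q hnk, norm_zero]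
    positivity
  · obtain ⟨m, rfl⟩ := Nat.exists_eq_add_of_le' hkn
    rw [gaussBinom_add_eq_div hq, div_eq_mul_inv, mul_inv, norm_mul, norm_mul]
    gcongr
    exacts [hA _, hB _, hB _]

theorem tendsto_gaussBinom_two_mul (hq : ‖q‖ < 1) (k : ℤ) :
    Tendsto (fun n : ℕ ↦ gaussBinom q (2 * n) (n + k).toNat) atTop
      (𝓝 (∏' n : ℕ, (1 - q ^ (n + 1)))⁻¹) := by
  have hP := tendsto_qPochhammer hq
  have hL := tprod_one_sub_pow_succ_ne_zero hq
  have htop (l : ℤ) : Tendsto (fun n : ℕ ↦ (n + l).toNat) atTop atTop :=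
    tendsto_atTop.mpr fun b ↦ by
      filter_upwards [eventually_ge_atTop (b + l.natAbs)] with n hn
      lia
  have hdouble : Tendsto (fun n : ℕ ↦ 2 * n) atTop atTop :=
    tendsto_id.const_mul_atTop' two_pos
  have hquot := (hP.comp hdouble).div ((hP.comp (htop (-k))).mul (hP.comp (htop k)))
    (mul_ne_zero hL hL)
  rw [div_mul_cancel_left₀ hL] at hquot
  refine hquot.congr' ?_
  filter_upwards [eventually_ge_atTop k.natAbs] with n hn
  have hsplit : 2 * n = (n + -k).toNat + (n + k).toNat := by lia
  simp only [Pi.div_apply, Function.comp_apply]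
  rw [hsplit, gaussBinom_add_eq_div hq]

theorem tendsto_prod_mul_prod_jacobi (hq0 : q ≠ 0) (hq : ‖q‖ < 1) (hz : z ≠ 0) :
    Tendsto (fun n ↦ (∏ i ∈ range n, (1 + z * q ^ (i + 1))) * ∏ i ∈ range n, (1 + z⁻¹ * q ^ i))
      atTop (𝓝 ((∏' n : ℕ, (1 - q ^ (n + 1)))⁻¹ * ∑' k, jacobiTerm q z k)) := by
  obtain ⟨C, hC⟩ := exists_norm_gaussBinom_le hq
  have hbound := (summable_norm_jacobiTerm hq0 hq hz).mul_left C
  simp only [prod_mul_prod_eq_sum_gaussBinom_mul_jacobiTerm hq0 hz,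
    sum_eq_tsum_indicator _ (Icc _ _), ← tsum_mul_left]
  refine tendsto_tsum_of_dominated_convergence hbound (fun k ↦ ?_) (.of_forall fun n k ↦ ?_)
  · refine ((tendsto_gaussBinom_two_mul hq k).mul_const (jacobiTerm q z k)).congr' ?_
    filter_upwards [eventually_ge_atTop k.natAbs] with n hn
    have hk : k ∈ (Icc (-n : ℤ) n : Set ℤ) := by
      rw [mem_coe, mem_Icc]
      lia
    rw [Set.indicator_of_mem hk]
  · refine (norm_indicator_le_norm_self _ _).trans ?_
    rw [norm_mul]
    gcongr
    exact hC _ _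

theorem jacobi_triple_product (hq0 : q ≠ 0) (hq : ‖q‖ < 1) (hz : z ≠ 0) :
    ∏' n : ℕ, (1 - q ^ (n + 1)) * ((1 + z * q ^ (n + 1)) * (1 + z⁻¹ * q ^ n)) =
      ∑' k, jacobiTerm q z k := by
  have hP := multipliable_one_sub_pow_succ hq
  have hQ := (multipliable_one_add_mul_pow_succ z hq).mul (multipliable_one_add_mul_pow z⁻¹ hq)
  have hlim := hQ.hasProd.tendsto_prod_nat
  simp only [prod_mul_distrib] at hlim
  rw [hP.tprod_mul hQ, tendsto_nhds_unique hlim (tendsto_prod_mul_prod_jacobi hq0 hq hz),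
    mul_inv_cancel_left₀ (tprod_one_sub_pow_succ_ne_zero hq)]

theorem one_add_inv_mul_tprod_eq_tsum_jacobiTerm (hq0 : q ≠ 0) (hq : ‖q‖ < 1) (hz : z ≠ 0) :
    (1 + z⁻¹) * ∏' n : ℕ, (1 - q ^ (n + 1)) *
        (1 + (z + z⁻¹) * q ^ (n + 1) + (q ^ (n + 1)) ^ 2) =
      ∑' k, jacobiTerm q z k := by
  have hP := multipliable_one_sub_pow_succ hq
  have hz₁ := multipliable_one_add_mul_pow_succ z hq
  have hz₂ := multipliable_one_add_mul_pow_succ z⁻¹ hq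
  have hz₃ := multipliable_one_add_mul_pow z⁻¹ hq
  have hhead : ∏' n : ℕ, (1 + z⁻¹ * q ^ n) = (1 + z⁻¹) * ∏' n : ℕ, (1 + z⁻¹ * q ^ (n + 1)) := by
    rw [tprod_eq_zero_mul' (f := fun n ↦ 1 + z⁻¹ * q ^ n) hz₂, pow_zero, mul_one]
  have hfactor (n : ℕ) : 1 + (z + z⁻¹) * q ^ (n + 1) + (q ^ (n + 1)) ^ 2 =
      (1 + z * q ^ (n + 1)) * (1 + z⁻¹ * q ^ (n + 1)) := by
    field_simp
    ring
  simp only [hfactor]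
  rw [← jacobi_triple_product hq0 hq hz,
    (hP.hasProd.mul (hz₁.hasProd.mul hz₂.hasProd)).tprod_eq,
    (hP.hasProd.mul (hz₁.hasProd.mul hz₃.hasProd)).tprod_eq, hhead]
  ring

end Limits

section CubeRoot

theorem jacobiTerm_six_mul_add {K : Type*} [Field K] {q ω : K} (hω : ω ^ 3 = 1) (k : ℤ) (r : ℕ) :
    jacobiTerm q ω (6 * k + r) =
      q ^ (18 * k ^ 2 + 3 * (2 * r + 1) * k + r * (r + 1) / 2) * ω ^ r := by
  have hω0 : ω ≠ 0 := by
    rintro rfl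
    norm_num at hω
  have hexp : (6 * k + r) * (6 * k + r + 1) / 2 =
      18 * k ^ 2 + 3 * (2 * r + 1) * k + r * (r + 1) / 2 := by
    rw [show (6 * k + r) * (6 * k + r + 1) =
        r * (r + 1) + (18 * k ^ 2 + 3 * (2 * r + 1) * k) * 2 by ring,
      Int.add_mul_ediv_right _ _ two_ne_zero, add_comm]
  have hperiod : ω ^ (6 * k) = 1 := by
    rw [show 6 * k = (3 : ℕ) * (2 * k) by push_cast; ring, zpow_mul, zpow_natCast, hω, one_zpow]
  rw [jacobiTerm, hexp, zpow_add₀ hω0, hperiod, one_mul, zpow_natCast]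

theorem jacobiTerm_six_mul_add_add_reflect {K : Type*} [Field K] {q ω : K} (hω : ω ^ 3 = 1)
    (k : ℤ) (r : ℕ) :
    jacobiTerm q ω (6 * k + r) + jacobiTerm q ω (-1 - (6 * k + r)) =
      (ω ^ r + ω⁻¹ ^ (r + 1)) * q ^ (18 * k ^ 2 + 3 * (2 * r + 1) * k + r * (r + 1) / 2) := by
  have hω0 : ω ≠ 0 := by
    rintro rfl
    norm_num at hω
  have hω' : ω⁻¹ ^ 3 = 1 := by rw [inv_pow, hω, inv_one]
  rw [jacobiTerm_neg_one_sub q hω0, jacobiTerm_six_mul_add hω, jacobiTerm_six_mul_add hω']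
  ring

theorem add_inv_eq_neg_one_of_isPrimitiveRoot {K : Type*} [Field K] {ω : K}
    (hω : IsPrimitiveRoot ω 3) : ω + ω⁻¹ = -1 := by
  have hsum : 1 + ω + ω ^ 2 = 0 := by
    simpa [sum_range_succ] using hω.geom_sum_eq_zero (by norm_num)
  have hinv : ω⁻¹ = ω ^ 2 := inv_eq_of_mul_eq_one_right (by linear_combination hω.pow_eq_one)
  linear_combination hinv + hsum

variable {K : Type*} [NormedField K] [CompleteSpace K] {q ω : K}

theorem tsum_jacobiTerm_of_isPrimitiveRoot (hq0 : q ≠ 0) (hq : ‖q‖ < 1)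
    (hω : IsPrimitiveRoot ω 3) :
    ∑' k, jacobiTerm q ω k =
      (1 + ω⁻¹) * ∑' k : ℤ, (q ^ (18 * k ^ 2 + 3 * k) + q ^ (18 * k ^ 2 + 15 * k + 3)
        - 2 * q ^ (18 * k ^ 2 + 9 * k + 1)) := by
  have hω0 : ω ≠ 0 := hω.ne_zero three_ne_zero
  have hcube : ω ^ 3 = 1 := hω.pow_eq_one
  have hinv : ω⁻¹ = ω ^ 2 := inv_eq_of_mul_eq_one_right (by linear_combination hcube)
  have hcoeff₁ : ω ^ 1 + ω⁻¹ ^ 2 = -2 * (1 + ω⁻¹) := by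
    linear_combination 2 * add_inv_eq_neg_one_of_isPrimitiveRoot hω + ω * hcube
      + (ω⁻¹ + ω ^ 2) * hinv
  have hcoeff₂ : ω ^ 2 + ω⁻¹ ^ 3 = 1 + ω⁻¹ := by
    rw [← hinv, inv_pow, hcube, inv_one, add_comm]
  rw [tsum_eq_tsum_sum_range_add_reflect (n := 3) three_ne_zero
    (summable_norm_jacobiTerm hq0 hq hω0).of_norm, ← tsum_mul_left]
  refine tsum_congr fun k ↦ ?_
  calc _ = ∑ r ∈ range 3, (ω ^ r + ω⁻¹ ^ (r + 1)) *
          q ^ (18 * k ^ 2 + 3 * (2 * r + 1) * k + r * (r + 1) / 2) :=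
        sum_congr rfl fun r _ ↦ jacobiTerm_six_mul_add_add_reflect hcube k r
    _ = (ω ^ 0 + ω⁻¹ ^ 1) * q ^ (18 * k ^ 2 + 3 * k) +
          (ω ^ 1 + ω⁻¹ ^ 2) * q ^ (18 * k ^ 2 + 9 * k + 1) +
          (ω ^ 2 + ω⁻¹ ^ 3) * q ^ (18 * k ^ 2 + 15 * k + 3) := by
        norm_num [sum_range_succ]
    _ = _ := by
        rw [hcoeff₁, hcoeff₂]
        ring

theorem tprod_one_sub_mul_one_sub_add_sq_of_isPrimitiveRoot (hq0 : q ≠ 0) (hq : ‖q‖ < 1)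
    (hω : IsPrimitiveRoot ω 3) :
    ∏' n : ℕ, (1 - q ^ (n + 1)) * (1 - q ^ (n + 1) + (q ^ (n + 1)) ^ 2) =
      ∑' k : ℤ, (q ^ (18 * k ^ 2 + 3 * k) + q ^ (18 * k ^ 2 + 15 * k + 3)
        - 2 * q ^ (18 * k ^ 2 + 9 * k + 1)) := by
  have hω0 : ω ≠ 0 := hω.ne_zero three_ne_zero
  have htrace : ω + ω⁻¹ = -1 := add_inv_eq_neg_one_of_isPrimitiveRoot hω
  have hne : 1 + ω⁻¹ ≠ 0 := by
    rw [show 1 + ω⁻¹ = -ω by linear_combination htrace]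
    exact neg_ne_zero.mpr hω0
  refine mul_left_cancel₀ hne ?_
  rw [← tsum_jacobiTerm_of_isPrimitiveRoot hq0 hq hω,
    ← one_add_inv_mul_tprod_eq_tsum_jacobiTerm hq0 hq hω0, htrace]
  simp only [neg_one_mul, ← sub_eq_add_neg]

theorem tprod_one_sub_mul_one_sub_add_sq {x : ℝ} (hx0 : x ≠ 0) (hx : |x| < 1) :
    ∏' n : ℕ, (1 - x ^ (n + 1)) * (1 - x ^ (n + 1) + (x ^ (n + 1)) ^ 2) =
      ∑' k : ℤ, (x ^ (18 * k ^ 2 + 3 * k) + x ^ (18 * k ^ 2 + 15 * k + 3)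
        - 2 * x ^ (18 * k ^ 2 + 9 * k + 1)) := by
  have hcomplex := tprod_one_sub_mul_one_sub_add_sq_of_isPrimitiveRoot (q := (x : ℂ))
    (Complex.ofReal_ne_zero.mpr hx0) (by rwa [Complex.norm_real])
    (Complex.isPrimitiveRoot_exp 3 three_ne_zero)
  have htprod := Function.LeftInverse.map_tprod (L := .unconditional ℕ)
    (fun n : ℕ ↦ (1 - x ^ (n + 1)) * (1 - x ^ (n + 1) + (x ^ (n + 1)) ^ 2))
    (g := Complex.ofRealHom) Complex.continuous_ofReal Complex.continuous_re Complex.ofReal_re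
  apply Complex.ofReal_injective
  rw [Complex.ofReal_tsum]
  simp only [Complex.ofRealHom_eq_coe] at htprod
  rw [htprod]
  push_cast
  exact hcomplex

end CubeRoot

end JacobiTriple

theorem prod_eq_sum_two_arm (q : ℝ) (hq0 : 0 < q) (hq1 : q < 1) :
    (∏' n : ℕ, ((1 - q ^ (((n : ℝ) + 1) / 3)) *
        (1 - q ^ (((n : ℝ) + 1) / 3) + q ^ (2 * ((n : ℝ) + 1) / 3)))) =
      ∑' k : ℤ, (q ^ (6 * (k : ℝ) ^ 2 + (k : ℝ)) +
        q ^ (6 * (k : ℝ) ^ 2 + 5 * (k : ℝ) + 1) -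
        2 * q ^ (6 * (k : ℝ) ^ 2 + 3 * (k : ℝ) + 1 / 3)) := by
  have hx0 : 0 < q ^ (1 / 3 : ℝ) := Real.rpow_pos_of_pos hq0 _
  have hx1 : q ^ (1 / 3 : ℝ) < 1 := Real.rpow_lt_one hq0.le hq1 (by norm_num)
  have hpow (m : ℤ) : (q ^ (1 / 3 : ℝ)) ^ m = q ^ ((m : ℝ) / 3) := by
    rw [← Real.rpow_mul_intCast hq0.le, one_div_mul_eq_div]
  have hfactor (n : ℕ) : q ^ (((n : ℝ) + 1) / 3) = (q ^ (1 / 3 : ℝ)) ^ (n + 1) := by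
    rw [← zpow_natCast, hpow, Int.cast_natCast, Nat.cast_add_one]
  have hfactor_sq (n : ℕ) : q ^ (2 * ((n : ℝ) + 1) / 3) = ((q ^ (1 / 3 : ℝ)) ^ (n + 1)) ^ 2 := by
    rw [← hfactor, ← Real.rpow_mul_natCast hq0.le]
    ring_nf
  simp only [hfactor, hfactor_sq]
  rw [JacobiTriple.tprod_one_sub_mul_one_sub_add_sq hx0.ne' (by rwa [abs_of_pos hx0])]
  refine tsum_congr fun k ↦ ?_
  rw [hpow, hpow, hpow]
  push_cast
  ring_nf
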